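/- Let P1 be an l×k matrix over a finite field 𝔽_q such that every column of P1 has Hamming weight at least t and the supports of any two distinct columns of P1 intersect in at most one position. Then every nonzero linear combination of at most t columns of P1 has Hamming weight at least t; in particular, any t distinct columns of P1 are linearly independent over 𝔽_q. -/

import Mathlib

open Matrix Finset

/-- The support of a vector, as a `Finset`. -/
def vsupp {α F : Type*} [Fintype α] [Zero F] [DecidableEq F] (c : α → F) : Finset α :=
  Finset.univ.filter (fun a => c a ≠ 0)

theorem stmt5_key {l k : ℕ} {F : Type*} [Field F] [DecidableEq F]
    (P1 : Matrix (Fin l) (Fin k) F) (t : ℕ)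
    (hcol : ∀ j : Fin k, t ≤ (vsupp (fun i => P1 i j)).card)
    (hint : ∀ j₁ j₂ : Fin k, j₁ ≠ j₂ →
      (vsupp (fun i => P1 i j₁) ∩ vsupp (fun i => P1 i j₂)).card ≤ 1)
    (c : Fin k → F) (hc : (vsupp c).card ≤ t) (hne : (vsupp c).Nonempty) :
    t ≤ (vsupp (P1.mulVec c)).card := by
  set T := vsupp c with hT
  let A : Fin k → Finset (Fin l) := fun j => vsupp (fun i => P1 i j)
  let B : Fin k → Finset (Fin l) := fun j => A j \ (T.erase j).biUnion (fun j' => A j ∩ A j')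
  have memA : ∀ i j, i ∈ A j ↔ P1 i j ≠ 0 := by
    intro i j; simp [A, vsupp]
  have memT : ∀ j, j ∈ T ↔ c j ≠ 0 := by
    intro j; simp [hT, vsupp]
  have memB : ∀ i j, i ∈ B j → P1 i j ≠ 0 ∧ ∀ j' ∈ T, j' ≠ j → P1 i j' = 0 := by
    intro i j h
    simp only [B, mem_sdiff, mem_biUnion, mem_inter, mem_erase, memA] at h
    refine ⟨h.1, fun j' h1 h2 => ?_⟩
    by_contra h3
    exact h.2 ⟨j', ⟨h2, h1⟩, h.1, h3⟩
  have cardB : ∀ j ∈ T, t - (T.card - 1) ≤ (B j).card := by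
    intro j hj
    have h1 : ((T.erase j).biUnion (fun j' => A j ∩ A j')).card ≤ (T.erase j).card * 1 :=
      card_biUnion_le_card_mul _ _ _ fun j' hj' => hint j j' (ne_of_mem_erase hj').symm
    rw [card_erase_of_mem hj, mul_one] at h1
    have h2 := le_card_sdiff ((T.erase j).biUnion (fun j' => A j ∩ A j')) (A j)
    have h3 : t ≤ (A j).card := hcol j
    change t - (T.card - 1) ≤ (A j \ _).card
    omega
  have hdisj : ∀ j ∈ T, ∀ j' ∈ T, j ≠ j' → Disjoint (B j) (B j') := by
    intro j hj j' hj' hn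
    rw [Finset.disjoint_left]
    intro i hi hi'
    exact (memB i j hi).1 ((memB i j' hi').2 j hj hn)
  have hsub : T.biUnion B ⊆ vsupp (P1.mulVec c) := by
    intro i hi
    obtain ⟨j, hj, hi⟩ := mem_biUnion.1 hi
    obtain ⟨h1, h2⟩ := memB i j hi
    have : P1.mulVec c i = P1 i j * c j := by
      simp only [Matrix.mulVec, dotProduct]
      refine Finset.sum_eq_single j (fun j' _ hn => ?_) (by simp)
      by_cases hj' : j' ∈ T
      · rw [h2 j' hj' hn, zero_mul]
      · rw [memT, not_not] at hj'
        rw [hj', mul_zero]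
    simp only [vsupp, mem_filter, mem_univ, true_and, this]
    exact mul_ne_zero h1 ((memT j).1 hj)
  have h1 := card_le_card hsub
  rw [card_biUnion hdisj] at h1
  have h2 := Finset.card_nsmul_le_sum T (fun j => (B j).card) _ cardB
  have hpos := hne.card_pos
  refine le_trans ?_ (h2.trans h1)
  rw [smul_eq_mul]
  obtain ⟨s, hs⟩ : ∃ s, T.card = s + 1 := ⟨T.card - 1, by omega⟩
  obtain ⟨d, rfl⟩ : ∃ d, t = s + 1 + d := ⟨t - (s + 1), by omega⟩
  rw [hs, show s + 1 + d - (s + 1 - 1) = d + 1 by omega]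
  nlinarith [Nat.zero_le (s * d)]

/-- If every column of `P1` has Hamming weight at least `t` and the
supports of any two distinct columns intersect in at most one position, then every nonzero
linear combination of at most `t` columns of `P1` has Hamming weight at least `t`; in
particular, any `t` distinct columns of `P1` are linearly independent. -/
theorem stmt5 {l k : ℕ} {F : Type*} [Field F] [Fintype F] [DecidableEq F]
    (P1 : Matrix (Fin l) (Fin k) F) (t : ℕ)
    (hcol : ∀ j : Fin k, t ≤ (vsupp (fun i => P1 i j)).card)
    (hint : ∀ j₁ j₂ : Fin k, j₁ ≠ j₂ →
      (vsupp (fun i => P1 i j₁) ∩ vsupp (fun i => P1 i j₂)).card ≤ 1) :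
    (∀ (S : Finset (Fin k)) (c : Fin k → F), S.card ≤ t → (∀ j ∉ S, c j = 0) →
      P1.mulVec c ≠ 0 → t ≤ (vsupp (P1.mulVec c)).card) ∧
    (∀ S : Finset (Fin k), S.card = t →
      LinearIndependent F (fun j : {x // x ∈ S} => fun i => P1 i j.1)) := by
  have hsupp : ∀ (S : Finset (Fin k)) (c : Fin k → F), (∀ j ∉ S, c j = 0) →
      (vsupp c).card ≤ S.card := by
    intro S c h
    refine card_le_card fun j hj => ?_
    by_contra hn
    simp only [vsupp, mem_filter] at hj
    exact hj.2 (h j hn)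
  refine ⟨fun S c hS hc hne => ?_, fun S hS => ?_⟩
  · refine stmt5_key P1 t hcol hint c ((hsupp S c hc).trans hS) ?_
    by_contra hemp
    rw [not_nonempty_iff_eq_empty] at hemp
    apply hne
    have : c = 0 := by
      funext j
      by_contra hj
      have : j ∈ vsupp c := by simpa [vsupp] using hj
      rw [hemp] at this
      simp at this
    rw [this, Matrix.mulVec_zero]
  · rw [Fintype.linearIndependent_iff]
    intro g hg j
    by_contra hj
    let c : Fin k → F := fun j => if h : j ∈ S then g ⟨j, h⟩ else 0
    have hc : ∀ j ∉ S, c j = 0 := fun j h => by simp [c, h]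
    have hcj : j.1 ∈ vsupp c := by simpa [vsupp, c] using hj
    have hk := stmt5_key P1 t hcol hint c ((hsupp S c hc).trans hS.le) ⟨_, hcj⟩
    have h0 : P1.mulVec c = 0 := by
      funext i
      have hgi := congrFun hg i
      simp only [Finset.sum_apply, Pi.smul_apply, smul_eq_mul, Pi.zero_apply] at hgi
      rw [Pi.zero_apply, ← hgi]
      simp only [Matrix.mulVec, dotProduct]
      rw [← Finset.sum_subset (Finset.subset_univ S)
        (fun x _ hx => by rw [hc x hx, mul_zero]), ← Finset.sum_coe_sort S]
      refine Finset.sum_congr rfl fun x _ => ?_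
      simp [c, mul_comm]
    rw [h0] at hk
    simp [vsupp] at hk
    have := card_pos.2 ⟨_, j.2⟩
    omega
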